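/- Let w = (w₁,w₂,w₃,w₄) and w' = (w₁',w₂',w₃',w₄') be unit vectors in ℝ⁴ satisfying (w₁ − w₄)² + (w₂ + w₃)² = (w₁' − w₄')² + (w₂' + w₃')². Then there exist real numbers s and t such that (R_y(s) ⊗ R_y(t)) w = w'. (Rotation gates alone act transitively on each torus Σ_d(v₃,v₄).) -/

import Mathlib

/-!
Put `a = s / 2` and `b = t / 2`. In the coordinates `P = (w₁ - w₄, w₂ + w₃)` and
`Q = (w₁ + w₄, w₃ - w₂)` of `ℝ⁴`, the gate `R_y(s) ⊗ R_y(t)` rotates `P` by the angle `a + b` and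
`Q` by the angle `a - b`. The hypothesis equates `|P|` for the two states, and since
`|P|² + |Q|² = 2 |w|²`, the normalization equates `|Q|` too. Hence some rotations by `α` and `β`
carry `P` to `P'` and `Q` to `Q'` (`exists_rotation`), and `s = α + β`, `t = α - β` realizes both
at once.
-/

open Matrix Real

/-- Kronecker product of two `2 × 2` real matrices, as a `4 × 4` real matrix
acting on amplitude vectors `(w₁,w₂,w₃,w₄)` of two-qubit states. -/
noncomputable def kron (A B : Matrix (Fin 2) (Fin 2) ℝ) : Matrix (Fin 4) (Fin 4) ℝ :=
  Matrix.of fun i j =>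
    A ⟨i.val / 2, by omega⟩ ⟨j.val / 2, by omega⟩ *
    B ⟨i.val % 2, by omega⟩ ⟨j.val % 2, by omega⟩

/-- The single-qubit rotation gate `R_y(θ)`. -/
noncomputable def Ry (θ : ℝ) : Matrix (Fin 2) (Fin 2) ℝ :=
  !![Real.cos (θ / 2), -Real.sin (θ / 2); Real.sin (θ / 2), Real.cos (θ / 2)]

/-- The rotations of the plane act transitively on each circle about the origin, including the
degenerate circle of radius `0`. -/
lemma exists_rotation (x y x' y' : ℝ) (h : x ^ 2 + y ^ 2 = x' ^ 2 + y' ^ 2) :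
    ∃ θ : ℝ, Real.cos θ * x - Real.sin θ * y = x' ∧ Real.sin θ * x + Real.cos θ * y = y' := by
  set z : ℂ := ⟨x, y⟩ with hz
  set z' : ℂ := ⟨x', y'⟩ with hz'
  have hn : ‖z‖ = ‖z'‖ := by
    rw [Complex.norm_def, Complex.norm_def, Complex.normSq_apply, Complex.normSq_apply]
    congr 1
    simp only [hz, hz']
    linarith
  have hx : ‖z‖ * Real.cos z.arg = x := Complex.norm_mul_cos_arg z
  have hy : ‖z‖ * Real.sin z.arg = y := Complex.norm_mul_sin_arg z
  have hx' : ‖z'‖ * Real.cos z'.arg = x' := Complex.norm_mul_cos_arg z'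
  have hy' : ‖z'‖ * Real.sin z'.arg = y' := Complex.norm_mul_sin_arg z'
  refine ⟨z'.arg - z.arg, ?_, ?_⟩
  · rw [← hx', ← hn, ← sub_add_cancel z'.arg z.arg, Real.cos_add, add_sub_cancel_right]
    linear_combination (-Real.cos (z'.arg - z.arg)) * hx + Real.sin (z'.arg - z.arg) * hy
  · rw [← hy', ← hn, ← sub_add_cancel z'.arg z.arg, Real.sin_add, add_sub_cancel_right]
    linear_combination (-Real.sin (z'.arg - z.arg)) * hx - Real.cos (z'.arg - z.arg) * hy

theorem stmt_1 (w w' : Fin 4 → ℝ)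
    (hw : w 0 ^ 2 + w 1 ^ 2 + w 2 ^ 2 + w 3 ^ 2 = 1)
    (hw' : w' 0 ^ 2 + w' 1 ^ 2 + w' 2 ^ 2 + w' 3 ^ 2 = 1)
    (h : (w 0 - w 3) ^ 2 + (w 1 + w 2) ^ 2
        = (w' 0 - w' 3) ^ 2 + (w' 1 + w' 2) ^ 2) :
    ∃ s t : ℝ, (kron (Ry s) (Ry t)).mulVec w = w' := by
  obtain ⟨α, hP₁, hP₂⟩ := exists_rotation _ _ _ _ h
  obtain ⟨β, hQ₁, hQ₂⟩ := exists_rotation (w 0 + w 3) (w 2 - w 1) (w' 0 + w' 3) (w' 2 - w' 1)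
    (by linarith)
  refine ⟨α + β, α - β, ?_⟩
  have hα : α = (α + β) / 2 + (α - β) / 2 := by ring
  have hβ : β = (α + β) / 2 - (α - β) / 2 := by ring
  -- Only the half-angles `a`, `b` occur in the matrix, so `α = a + b` and `β = a - b` are expanded.
  generalize (α + β) / 2 = a at hα hβ
  generalize (α - β) / 2 = b at hα hβ
  have ha : (α + β) / 2 = a := by linarith
  have hb : (α - β) / 2 = b := by linarith
  rw [hα, Real.cos_add, Real.sin_add] at hP₁ hP₂
  rw [hβ, Real.cos_sub, Real.sin_sub] at hQ₁ hQ₂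
  ext i
  fin_cases i <;> simp [kron, Ry, Matrix.mulVec, dotProduct, Fin.sum_univ_four, ha, hb]
  · linear_combination (hP₁ + hQ₁) / 2
  · linear_combination (hP₂ - hQ₂) / 2
  · linear_combination (hP₂ + hQ₂) / 2
  · linear_combination (hQ₁ - hP₁) / 2
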